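/- (Theorem 2.3, case 2, negative half-line.) Let σ > 0, c > 0 and K < 0, and set h(y) = K·y + c (so h(y) ≥ c > 0 for y ≤ 0). Define F(y) = G(y, σ·h(y)) = (1/√(2π(σ(Ky+c))²)) ∫_{−∞}^{y} exp(−x²/(2(σ(Ky+c))²)) dx. Then F is strictly increasing on (−∞, 0]. -/

import Mathlib

/-- The CDF at `y` of a centered normal distribution with standard deviation `s`. -/
noncomputable def gaussCDF (y s : ℝ) : ℝ :=
  (Real.sqrt (2 * Real.pi * s ^ 2))⁻¹ * ∫ x in Set.Iic y, Real.exp (-x ^ 2 / (2 * s ^ 2))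

theorem gaussCDF_scale (y s : ℝ) (hs : 0 < s) :
    gaussCDF y s = (Real.sqrt (2 * Real.pi))⁻¹ *
      ∫ x in Set.Iic (y / s), Real.exp (-(1 / 2) * x ^ 2) := by
  have h := MeasureTheory.integral_comp_mul_left_Ioi
    (fun x : ℝ => Real.exp (-x ^ 2 / (2 * s ^ 2))) (-y / s) hs
  have e1 : s * (-y / s) = -y := by field_simp
  rw [e1] at h
  have h1 := integral_comp_neg_Iic y (fun x : ℝ => Real.exp (-x ^ 2 / (2 * s ^ 2)))
  have h2 := integral_comp_neg_Iic (y / s) (fun x : ℝ => Real.exp (-(1 / 2) * x ^ 2))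
  simp only [neg_sq] at h1 h2
  have e2 : ∀ x : ℝ, -(s * x) ^ 2 / (2 * s ^ 2) = -(1 / 2) * x ^ 2 := by
    intro x; field_simp
  simp only [e2] at h
  rw [neg_div] at h
  unfold gaussCDF
  rw [h1, h2, h, Real.sqrt_mul (by positivity), Real.sqrt_sq hs.le, mul_inv, smul_eq_mul, mul_assoc]

/-- Theorem 2.3, case 2, negative half-line: for `σ > 0`, `c > 0`, `K < 0` and
`h(y) = K y + c`, the random limit normal function `F(y) = G(y, σ (K y + c))` is
strictly increasing on `(-∞, 0]`. -/
theorem random_limit_normal_stmt8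
    (σ c K : ℝ) (hσ : 0 < σ) (hc : 0 < c) (hK : K < 0)
    (F : ℝ → ℝ) (hF : ∀ y, F y = gaussCDF y (σ * (K * y + c))) :
    StrictMonoOn F (Set.Iic 0) := by
  intro a ha b hb hab
  simp only [Set.mem_Iic] at ha hb
  have pa : 0 < K * a + c := by nlinarith
  have pb : 0 < K * b + c := by nlinarith
  rw [hF, hF, gaussCDF_scale _ _ (by positivity), gaussCDF_scale _ _ (by positivity)]
  have hlt : a / (σ * (K * a + c)) < b / (σ * (K * b + c)) := by
    rw [div_lt_div_iff₀ (by positivity) (by positivity)]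
    nlinarith [mul_pos (mul_pos hσ hc) (sub_pos.2 hab)]
  have hi : MeasureTheory.Integrable (fun x : ℝ => Real.exp (-(1 / 2) * x ^ 2)) :=
    integrable_exp_neg_mul_sq (by norm_num)
  have hs := intervalIntegral.integral_Iic_sub_Iic (hi.integrableOn (s := Set.Iic (a / (σ * (K * a + c)))))
    (hi.integrableOn (s := Set.Iic (b / (σ * (K * b + c)))))
  have hp := intervalIntegral.intervalIntegral_pos_of_pos hi.intervalIntegrable
    (fun x => Real.exp_pos _) hlt
  apply mul_lt_mul_of_pos_left _ (by positivity)
  linarith
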